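/- Assume Slater's condition: there exist P̃ ∈ P(R) and η > 0 such that E_{P̃}[C(·, b)] − v ≤ −η for every b ∈ R. Assume also λ_1 = 0 and v ≤ 2Θ. Then for any positive integer ℵ, the dual variables of Algorithm 1 satisfy λ_t ≤ θ ℵ for every t ≥ 1, where ϱ = μ(2Θ − v), χ = (1/(η ℵ)) ( (1/2) μ (4Θ² + v²) + (α/2)|R|Θ² + 1/(α(ℵ+1)) + Θ ) + ϱ(ℵ+2)/(2ℵ), and θ = max{ϱ, χ}. -/

import Mathlib

open Finset

/-!
The Lyapunov function `λ² / (2μ) + ‖x̃ - x‖² / (2α)`, with `x̃` the Slater point, has drift at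
most `const - η λ`: the proximal step is the minimisation of a strongly convex function, so
comparing its minimiser with `x̃` bounds `λ g(x)` by `const - η λ` up to a telescoping difference of
squared distances.

Over a window of `N + 1` steps, either `λ` does not increase, or the Lyapunov function decreases by
at most the (bounded) distance term. In the second case the average of `λ` over the window is at
most `const / η`, and since `λ` gains at most `ϱ` per step its last value exceeds this average by at
most `ϱ (N + 2) / 2`.
-/

section StrongConvexity

variable {E : Type*} [NormedAddCommGroup E]

lemma add_modulus_le_of_isMinOn [NormedSpace ℝ E] {K : Set E} {F : E → ℝ} {φ : ℝ → ℝ} {p q : E}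
    (hF : UniformConvexOn K φ F) (hmin : IsMinOn F K p) (hp : p ∈ K) (hq : q ∈ K) :
    F p + φ ‖q - p‖ ≤ F q := by
  have hsegment : ∀ t ∈ Set.Ioo (0 : ℝ) 1, F p + (1 - t) * φ ‖q - p‖ ≤ F q := by
    rintro t ⟨ht0, ht1⟩
    have hconv := hF.2 hq hp ht0.le (sub_nonneg.2 ht1.le) (add_sub_cancel t 1)
    have hle := hmin (hF.1 hq hp ht0.le (sub_nonneg.2 ht1.le) (add_sub_cancel t 1))
    simp only [Set.mem_ofPred_eq, smul_eq_mul] at hconv hle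
    refine le_of_mul_le_mul_left ?_ ht0
    linarith
  have hlim : Filter.Tendsto (fun t : ℝ => F p + (1 - t) * φ ‖q - p‖) (nhdsWithin 0 (Set.Ioi 0))
      (nhds (F p + (1 - 0) * φ ‖q - p‖)) :=
    (Continuous.tendsto (by fun_prop) 0).mono_left nhdsWithin_le_nhds
  rw [sub_zero, one_mul] at hlim
  exact le_of_tendsto hlim (Filter.eventually_of_mem (Ioo_mem_nhdsGT one_pos) hsegment)

variable [InnerProductSpace ℝ E] {K : Set E}

lemma strongConvexOn_norm_sub_sq (hK : Convex ℝ K) (m : ℝ) (z : E) :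
    StrongConvexOn K m fun x => m / 2 * ‖x - z‖ ^ 2 := by
  rw [strongConvexOn_iff_convex]
  have haffine : (fun x : E => m / 2 * ‖x - z‖ ^ 2 - m / 2 * ‖x‖ ^ 2) =
      fun x => innerₛₗ ℝ (-m • z) x + m / 2 * ‖z‖ ^ 2 := by
    ext x
    rw [norm_sub_sq_real, innerₛₗ_apply_apply, real_inner_smul_left, real_inner_comm]
    ring
  rw [haffine]
  exact ((innerₛₗ ℝ (-m • z)).convexOn hK).add_const _

lemma prox_three_point {F : E → ℝ} {m : ℝ} {p q z : E} (hF : ConvexOn ℝ K F)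
    (hmin : IsMinOn (fun y => F y + m / 2 * ‖y - z‖ ^ 2) K p) (hp : p ∈ K) (hq : q ∈ K) :
    F p + m / 2 * ‖p - z‖ ^ 2 + m / 2 * ‖q - p‖ ^ 2 ≤ F q + m / 2 * ‖q - z‖ ^ 2 := by
  have hstrong := hF.uniformConvexOn_zero.add (strongConvexOn_norm_sub_sq hF.1 m z)
  rw [zero_add] at hstrong
  exact add_modulus_le_of_isMinOn hstrong hmin hp hq

end StrongConvexity

section Drift

variable {L V d : ℕ → ℝ} {ρ η κ μ Δ : ℝ}

lemma le_add_mul_of_succ_le (hinc : ∀ k, L (k + 1) ≤ L k + ρ) (n : ℕ) :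
    L n ≤ L 0 + n * ρ := by
  induction n with
  | zero => simp
  | succ n ih =>
    push_cast
    linarith [hinc n]

lemma mul_sub_le_sum_range_of_succ_le (hinc : ∀ k, L (k + 1) ≤ L k + ρ) (n : ℕ) :
    n * L n - ρ * (n * (n + 1)) / 2 ≤ ∑ i ∈ range n, L i := by
  induction n with
  | zero => simp
  | succ n ih =>
    have hlast : ((n : ℝ) + 1) * L (n + 1) ≤ (n + 1) * (L n + ρ) := by gcongr; exact hinc n
    rw [sum_range_succ]
    push_cast
    linarith

lemma add_mul_sum_range_le_of_drift (hdrift : ∀ k, V (k + 1) + η * L k ≤ V k + κ) (n : ℕ) :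
    V n + η * ∑ i ∈ range n, L i ≤ V 0 + n * κ := by
  induction n with
  | zero => simp
  | succ n ih =>
    rw [sum_range_succ]
    push_cast
    linarith [hdrift n]

lemma le_of_drift_of_succ_le {n : ℕ} (hn : n ≠ 0) (hη : 0 < η)
    (hinc : ∀ k, L (k + 1) ≤ L k + ρ) (hdrift : ∀ k, V (k + 1) + η * L k ≤ V k + κ)
    (hV : V 0 ≤ V n + Δ) :
    L n ≤ (κ + Δ / n) / η + ρ * (n + 1) / 2 := by
  have hn' : (0 : ℝ) < n := by positivity
  have hsum : η * ∑ i ∈ range n, L i ≤ n * κ + Δ := by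
    linarith [add_mul_sum_range_le_of_drift hdrift n]
  refine le_of_mul_le_mul_left ?_ hn'
  calc n * L n ≤ ∑ i ∈ range n, L i + ρ * (n * (n + 1)) / 2 := by
        linarith [mul_sub_le_sum_range_of_succ_le hinc n]
    _ ≤ (n * κ + Δ) / η + ρ * (n * (n + 1)) / 2 := by
        gcongr
        rwa [le_div_iff₀' hη]
    _ = n * ((κ + Δ / n) / η + ρ * (n + 1) / 2) := by field_simp

lemma le_max_of_sq_drift (hL : ∀ k, 0 ≤ L k) (hd : ∀ k, 0 ≤ d k) (hdΔ : ∀ k, d k ≤ Δ)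
    (hμ : 0 < μ) (hη : 0 < η) (hρ : 0 ≤ ρ) (hinc : ∀ k, L (k + 1) ≤ L k + ρ)
    (hdrift : ∀ k, L (k + 1) ^ 2 / (2 * μ) + d (k + 1) + η * L k ≤
      L k ^ 2 / (2 * μ) + d k + κ) (N k : ℕ) :
    L k ≤ max (L 0 + N * ρ) ((κ + Δ / (N + 1)) / η + ρ * (N + 2) / 2) := by
  induction k using Nat.strong_induction_on with
  | _ k ih =>
    rcases le_or_gt k N with hk | hk
    · refine le_max_of_le_left ((le_add_mul_of_succ_le hinc k).trans ?_)
      gcongr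
    · obtain ⟨s, rfl⟩ : ∃ s, k = s + (N + 1) := ⟨k - (N + 1), by omega⟩
      rcases le_or_gt (L (s + (N + 1))) (L s) with hle | hlt
      · exact hle.trans (ih s (by omega))
      · have hsq : L s ^ 2 / (2 * μ) ≤ L (s + (N + 1)) ^ 2 / (2 * μ) := by
          have := hL s
          gcongr
        have hloss : L s ^ 2 / (2 * μ) + d s ≤
            L (s + (N + 1)) ^ 2 / (2 * μ) + d (s + (N + 1)) + Δ := by
          linarith [hd (s + (N + 1)), hdΔ s]
        have hwindow := le_of_drift_of_succ_le (L := fun i => L (s + i))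
          (V := fun i => L (s + i) ^ 2 / (2 * μ) + d (s + i)) N.succ_ne_zero hη
          (fun i => hinc (s + i)) (fun i => hdrift (s + i)) hloss
        refine le_max_of_le_right (hwindow.trans_eq ?_)
        push_cast
        ring

end Drift

section PrimalDual

variable {E : Type*} [NormedAddCommGroup E]

/-- A run of the proximal primal–dual method on `K`: `x (k + 1)` minimises the Lagrangian of the
cost `f` and the constraint `g k` plus a proximal term around `x k`, then the multiplier takes a
projected ascent step. The constraint of round `k` uses the multiplier `lam k`, so `lam k` is
`λ_{k+1}` in Algorithm 1, whose multipliers are indexed from `1`. -/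
structure IsPrimalDualRun (K : Set E) (f : E → ℝ) (g : ℕ → E → ℝ) (α μ : ℝ) (x : ℕ → E)
    (lam : ℕ → ℝ) : Prop where
  mem : ∀ k, x k ∈ K
  isMinOn : ∀ k,
    IsMinOn (fun y => f y + lam k * g k y + 1 / (2 * α) * ‖y - x k‖ ^ 2) K (x (k + 1))
  lam_succ : ∀ k, lam (k + 1) = max 0 (lam k + μ * g k (x (k + 1)))

namespace IsPrimalDualRun

variable {K : Set E} {f : E → ℝ} {g : ℕ → E → ℝ} {α μ u M B η : ℝ} {x : ℕ → E}
  {lam : ℕ → ℝ} {q : E}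

lemma lam_nonneg (h : IsPrimalDualRun K f g α μ x lam) (hlam0 : 0 ≤ lam 0) : ∀ k, 0 ≤ lam k
  | 0 => hlam0
  | k + 1 => h.lam_succ k ▸ le_max_left _ _

lemma lam_succ_le (h : IsPrimalDualRun K f g α μ x lam) (hμ : 0 ≤ μ) (hlam0 : 0 ≤ lam 0)
    (hu : 0 ≤ u) (hgu : ∀ k, ∀ y ∈ K, g k y ≤ u) (k : ℕ) : lam (k + 1) ≤ lam k + μ * u := by
  rw [h.lam_succ]
  refine max_le (add_nonneg (h.lam_nonneg hlam0 k) (mul_nonneg hμ hu)) ?_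
  gcongr
  exact hgu k _ (h.mem _)

lemma lam_succ_sq_le (h : IsPrimalDualRun K f g α μ x lam) (k : ℕ) :
    lam (k + 1) ^ 2 ≤ (lam k + μ * g k (x (k + 1))) ^ 2 := by
  rw [h.lam_succ]
  rcases le_total 0 (lam k + μ * g k (x (k + 1))) with hnonneg | hnonpos
  · rw [max_eq_right hnonneg]
  · rw [max_eq_left hnonpos, zero_pow two_ne_zero]
    exact sq_nonneg _

variable [InnerProductSpace ℝ E]

lemma lam_mul_le (h : IsPrimalDualRun K f g α μ x lam) (hα : 0 < α) (hlam0 : 0 ≤ lam 0)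
    (hf : ConvexOn ℝ K f) (hg : ∀ k, ConvexOn ℝ K (g k)) (hq : q ∈ K)
    (hfB : ∀ y ∈ K, f q ≤ f y + B) (hslater : ∀ k, g k q ≤ -η) (k : ℕ) :
    lam k * g k (x (k + 1)) ≤
      B - η * lam k + (‖q - x k‖ ^ 2 / (2 * α) - ‖q - x (k + 1)‖ ^ 2 / (2 * α)) := by
  have hlagrangian : ConvexOn ℝ K fun y => f y + lam k * g k y :=
    hf.add ((hg k).smul (h.lam_nonneg hlam0 k))
  have hcoeff : 1 / (2 * α) = α⁻¹ / 2 := by ring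
  have hmin := h.isMinOn k
  rw [hcoeff] at hmin
  have hprox := prox_three_point hlagrangian hmin (h.mem _) hq
  have hslater' := mul_le_mul_of_nonneg_left (hslater k) (h.lam_nonneg hlam0 k)
  have hmove : 0 ≤ α⁻¹ / 2 * ‖x (k + 1) - x k‖ ^ 2 := by positivity
  have hosc := hfB _ (h.mem (k + 1))
  calc lam k * g k (x (k + 1)) ≤
        B - η * lam k + (α⁻¹ / 2 * ‖q - x k‖ ^ 2 - α⁻¹ / 2 * ‖q - x (k + 1)‖ ^ 2) := by linarith
    _ = _ := by ring

lemma sq_drift (h : IsPrimalDualRun K f g α μ x lam) (hα : 0 < α) (hμ : 0 < μ)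
    (hlam0 : 0 ≤ lam 0) (hf : ConvexOn ℝ K f) (hg : ∀ k, ConvexOn ℝ K (g k)) (hq : q ∈ K)
    (hfB : ∀ y ∈ K, f q ≤ f y + B) (hslater : ∀ k, g k q ≤ -η)
    (hgM : ∀ k, ∀ y ∈ K, g k y ^ 2 ≤ M) (k : ℕ) :
    lam (k + 1) ^ 2 / (2 * μ) + ‖q - x (k + 1)‖ ^ 2 / (2 * α) + η * lam k ≤
      lam k ^ 2 / (2 * μ) + ‖q - x k‖ ^ 2 / (2 * α) + (μ * M / 2 + B) := by
  have hdual : lam (k + 1) ^ 2 / (2 * μ) ≤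
      lam k ^ 2 / (2 * μ) + lam k * g k (x (k + 1)) + μ * M / 2 :=
    calc lam (k + 1) ^ 2 / (2 * μ) ≤ (lam k + μ * g k (x (k + 1))) ^ 2 / (2 * μ) :=
          div_le_div_of_nonneg_right (h.lam_succ_sq_le k) (by positivity)
      _ = lam k ^ 2 / (2 * μ) + lam k * g k (x (k + 1)) + μ * g k (x (k + 1)) ^ 2 / 2 := by
          field_simp
          ring
      _ ≤ _ := by
          gcongr
          exact hgM k _ (h.mem _)
  linarith [h.lam_mul_le hα hlam0 hf hg hq hfB hslater k]

end IsPrimalDualRun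

theorem stmt2_general [InnerProductSpace ℝ E] {K : Set E} {f : E → ℝ} {g : ℕ → E → ℝ}
    {α μ u M B η δ : ℝ} {x : ℕ → E} {lam : ℕ → ℝ} {q : E}
    (h : IsPrimalDualRun K f g α μ x lam) (hα : 0 < α) (hμ : 0 < μ) (hη : 0 < η)
    (hlam0 : 0 ≤ lam 0) (hu : 0 ≤ u) (hf : ConvexOn ℝ K f) (hg : ∀ k, ConvexOn ℝ K (g k))
    (hq : q ∈ K) (hfB : ∀ y ∈ K, f q ≤ f y + B) (hslater : ∀ k, g k q ≤ -η)
    (hgu : ∀ k, ∀ y ∈ K, g k y ≤ u) (hgM : ∀ k, ∀ y ∈ K, g k y ^ 2 ≤ M)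
    (hδ : ∀ y ∈ K, ‖q - y‖ ^ 2 / 2 ≤ δ) (N k : ℕ) :
    lam k ≤ max (lam 0 + N * (μ * u))
      ((μ * M / 2 + B + δ / (α * (N + 1))) / η + μ * u * (N + 2) / 2) := by
  have hdist (k : ℕ) : ‖q - x k‖ ^ 2 / (2 * α) ≤ δ / α := by
    rw [← div_div]
    gcongr
    exact hδ _ (h.mem k)
  rw [← div_div δ]
  exact le_max_of_sq_drift (h.lam_nonneg hlam0) (fun k => by positivity) hdist hμ hη
    (mul_nonneg hμ.le hu) (h.lam_succ_le hμ.le hlam0 hu hgu)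
    (h.sq_drift hα hμ hlam0 hf hg hq hfB hslater hgM) N k

end PrimalDual

section Simplex

variable {R : Type*} [Fintype R]

/-- The probability simplex as a set of Euclidean vectors; Mathlib's `stdSimplex` lives in `R → ℝ`,
which carries the sup norm. -/
def euclideanSimplex (R : Type*) [Fintype R] : Set (EuclideanSpace ℝ R) :=
  {p | (∀ a, 0 ≤ p a) ∧ ∑ a, p a = 1}

lemma convex_euclideanSimplex : Convex ℝ (euclideanSimplex R) :=
  (convex_stdSimplex ℝ R).linear_preimage (WithLp.linearEquiv 2 ℝ (R → ℝ)).toLinearMap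

lemma convexOn_sum_mul {K : Set (EuclideanSpace ℝ R)} (hK : Convex ℝ K) (w : R → ℝ) :
    ConvexOn ℝ K fun p => ∑ a, p a * w a := by
  have hinner : (fun p : EuclideanSpace ℝ R => ∑ a, p a * w a) = innerₛₗ ℝ (WithLp.toLp 2 w) := by
    ext p
    simp [PiLp.inner_apply]
  exact hinner ▸ (innerₛₗ ℝ (WithLp.toLp 2 w)).convexOn hK

lemma sum_mul_mem_Icc {p : EuclideanSpace ℝ R} (hp : p ∈ euclideanSimplex R) {w : R → ℝ} {l u : ℝ}
    (hw : ∀ a, w a ∈ Set.Icc l u) : ∑ a, p a * w a ∈ Set.Icc l u :=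
  (convex_Icc l u).sum_mem (fun a _ => hp.1 a) hp.2 fun a _ => hw a

lemma norm_sub_sq_div_two_le_one {p q : EuclideanSpace ℝ R} (hp : p ∈ euclideanSimplex R)
    (hq : q ∈ euclideanSimplex R) : ‖p - q‖ ^ 2 / 2 ≤ 1 := by
  have hsq : ∀ r ∈ euclideanSimplex R, ‖r‖ ^ 2 ≤ 1 := fun r hr => by
    rw [EuclideanSpace.real_norm_sq_eq]
    simpa only [one_pow, hr.2] using sum_sq_le_sq_sum_of_nonneg fun i (_ : i ∈ univ) => hr.1 i
  have hinner : 0 ≤ inner ℝ p q := by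
    rw [PiLp.inner_apply]
    exact sum_nonneg fun a _ => mul_nonneg (hq.1 a) (hp.1 a)
  rw [norm_sub_sq_real]
  linarith [hsq p hp, hsq q hq]

end Simplex

theorem stmt2
    {R : Type*} [Fintype R] [Nonempty R]
    (CR : R → ℝ) (CV CT : R → R → ℝ) (Θ v α μ : ℝ)
    (hΘ : 0 < Θ) (hv : 0 < v) (hα : 0 < α) (hμ : 0 < μ)
    (hCR : ∀ a : R, 0 ≤ CR a ∧ CR a ≤ Θ)
    (hCV : ∀ a c : R, 0 ≤ CV a c ∧ CV a c ≤ Θ)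
    (hCT : ∀ a c : R, 0 ≤ CT a c ∧ CT a c ≤ Θ)
    (b : ℕ → R) (P : ℕ → EuclideanSpace ℝ R) (lam : ℕ → ℝ)
    (hP0 : (∀ a : R, 0 ≤ P 0 a) ∧ ∑ a : R, P 0 a = 1)
    (hlam1 : lam 1 = 0)
    (hPmem : ∀ t : ℕ, 1 ≤ t → (∀ a : R, 0 ≤ P t a) ∧ ∑ a : R, P t a = 1)
    (hPmin : ∀ t : ℕ, 1 ≤ t → ∀ Q : EuclideanSpace ℝ R,
      ((∀ a : R, 0 ≤ Q a) ∧ ∑ a : R, Q a = 1) →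
      (∑ a : R, P t a * CR a) +
        lam t * ((∑ a : R, P t a * (CV a (b (t-1)) + CT a (b (t-1)))) - v) +
        (1/(2*α)) * ‖P t - P (t-1)‖^2 ≤
      (∑ a : R, Q a * CR a) +
        lam t * ((∑ a : R, Q a * (CV a (b (t-1)) + CT a (b (t-1)))) - v) +
        (1/(2*α)) * ‖Q - P (t-1)‖^2)
    (hlam : ∀ t : ℕ, 1 ≤ t →
      lam (t+1) = max 0 (lam t + μ * ((∑ a : R, P t a * (CV a (b (t-1)) + CT a (b (t-1)))) - v)))
    (Ptilde : EuclideanSpace ℝ R) (η : ℝ) (hη : 0 < η)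
    (hPtilde : (∀ a : R, 0 ≤ Ptilde a) ∧ ∑ a : R, Ptilde a = 1)
    (hSlater : ∀ c : R, (∑ a : R, Ptilde a * (CV a c + CT a c)) - v ≤ -η)
    (hvΘ : v ≤ 2*Θ)
    (ℵ : ℕ) (hℵ : 1 ≤ ℵ) :
    ∀ t : ℕ, 1 ≤ t →
      lam t ≤ (max (μ*(2*Θ - v)) ((1/(η*(ℵ:ℝ))) * ((1/2)*μ*(4*Θ^2+v^2) + (α/2)*(Fintype.card R : ℝ)*Θ^2 + 1/(α*((ℵ:ℝ)+1)) + Θ) + (μ*(2*Θ - v))*((ℵ:ℝ)+2)/(2*(ℵ:ℝ)))) * (ℵ:ℝ) := by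
  have hmean (k : ℕ) (p) (hp : p ∈ euclideanSimplex R) :
      ∑ a, p a * (CV a (b k) + CT a (b k)) ∈ Set.Icc 0 (2 * Θ) :=
    sum_mul_mem_Icc hp fun a => ⟨add_nonneg (hCV a _).1 (hCT a _).1,
      (add_le_add (hCV a _).2 (hCT a _).2).trans_eq (two_mul Θ).symm⟩
  have hsq (k : ℕ) (p) (hp : p ∈ euclideanSimplex R) :
      (∑ a, p a * (CV a (b k) + CT a (b k)) - v) ^ 2 ≤ 4 * Θ ^ 2 + v ^ 2 := by
    nlinarith [(hmean k p hp).1, (hmean k p hp).2]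
  have hrun : IsPrimalDualRun (euclideanSimplex R) (fun p => ∑ a, p a * CR a)
      (fun k p => ∑ a, p a * (CV a (b k) + CT a (b k)) - v) α μ P (fun k => lam (k + 1)) :=
    { mem := fun k => k.casesOn hP0 fun k => hPmem (k + 1) k.succ_pos
      isMinOn := fun k => hPmin (k + 1) k.succ_pos
      lam_succ := fun k => hlam (k + 1) k.succ_pos }
  rintro (_ | t) ht
  · omega
  -- `E[C_R]` oscillates by at most `Θ`; the term `(α/2)|R|Θ²` of `χ` is slack.
  have hosc (p) (hp : p ∈ euclideanSimplex R) :
      ∑ a, Ptilde a * CR a ≤ ∑ a, p a * CR a + (α / 2 * Fintype.card R * Θ ^ 2 + Θ) := by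
    have hslack : 0 ≤ α / 2 * Fintype.card R * Θ ^ 2 := by positivity
    linarith [(sum_mul_mem_Icc hp hCR).1, (sum_mul_mem_Icc hPtilde hCR).2]
  have hbound := stmt2_general hrun hα hμ hη hlam1.ge (sub_nonneg.2 hvΘ)
    (convexOn_sum_mul convex_euclideanSimplex CR)
    (fun k => (convexOn_sum_mul convex_euclideanSimplex _).add_const (-v)) hPtilde hosc
    (fun k => hSlater (b k)) (fun k p hp => sub_le_sub_right (hmean k p hp).2 v)
    hsq (fun p hp => norm_sub_sq_div_two_le_one hPtilde hp) ℵ t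
  have hℵ' : (0 : ℝ) < ℵ := by exact_mod_cast hℵ
  refine hbound.trans_eq ?_
  rw [hlam1, max_mul_of_nonneg _ _ hℵ'.le]
  congr 1 <;> field_simp <;> ring
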